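/- Fatou's normality theorem: Let a, b be holomorphic functions on a domain Ω ⊆ ℂⁿ with a(z) ≠ b(z) for every z ∈ Ω. Let 𝓕 be a family of holomorphic functions on Ω such that f(z) ≠ a(z) and f(z) ≠ b(z) for all f ∈ 𝓕 and all z ∈ Ω. Then 𝓕 is normal on Ω. -/

import Mathlib

/-!
The quotients `(f - b) / (a - b)` omit `0` and `1`, so Schottky's theorem bounds them near a point
by their value at any nearby point, and this estimate passes back to `f`. On a connected `Ω` it
propagates along chains of balls: a sequence from the family either tends to `∞` at every
point, and then does so uniformly on compact sets, or has a subsequence that is bounded at one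
point, hence locally bounded, and Montel's theorem applies.

On a disc, a function `f` omitting `0` and `1` can be written as
`2 * f - 1 = cos (π * cos (π * F))`, and `F` then omits every `q` with `cos (π * q)` an integer.
Such `q` occur in every disc of radius `2`, so Bloch's theorem bounds `F'`, which gives Schottky's
theorem. In several (even infinitely many) variables one restricts `f` to complex lines.
-/

open Filter Topology

abbrev Cn (n : ℕ) := EuclideanSpace ℂ (Fin n)

/-- Chordal (spherical) distance between two finite points of the Riemann sphere. -/
noncomputable def chordal (a b : ℂ) : ℝ :=
  dist a b / (Real.sqrt (1 + ‖a‖^2) * Real.sqrt (1 + ‖b‖^2))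

/-- Chordal distance between a finite point and ∞. -/
noncomputable def chordalInf (a : ℂ) : ℝ := 1 / Real.sqrt (1 + ‖a‖^2)

/-- Spherical derivative of a holomorphic function of several complex variables. -/
noncomputable def sphDeriv {E : Type} [NormedAddCommGroup E] [NormedSpace ℂ E]
    (f : E → ℂ) (z : E) : ℝ := ‖fderiv ℂ f z‖ / (1 + ‖f z‖^2)

/-- A family `F` of (holomorphic) functions is normal on `Ω`: every sequence from `F`
has a subsequence which converges uniformly on compact subsets of `Ω` in the spherical
metric, either to a holomorphic function or to ∞. -/
def IsNormalFamily {E : Type} [NormedAddCommGroup E] [NormedSpace ℂ E]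
    (Ω : Set E) (F : Set (E → ℂ)) : Prop :=
  ∀ s : ℕ → E → ℂ, (∀ j, s j ∈ F) →
    ∃ φ : ℕ → ℕ, StrictMono φ ∧
      ((∃ g : E → ℂ, DifferentiableOn ℂ g Ω ∧
          ∀ K, K ⊆ Ω → IsCompact K → ∀ ε > 0, ∃ N, ∀ j ≥ N, ∀ z ∈ K,
            chordal (s (φ j) z) (g z) < ε) ∨
        (∀ K, K ⊆ Ω → IsCompact K → ∀ M : ℝ, ∃ N, ∀ j ≥ N, ∀ z ∈ K, M < ‖s (φ j) z‖))

section Bloch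

variable {X : Type*} [PseudoMetricSpace X] [ProperSpace X]

theorem exists_ball_forall_le_two_mul {φ : X → ℝ} {c : X} {r : ℝ} (hr : 0 < r)
    (hφ : ContinuousOn φ (Metric.closedBall c r)) (hc : 0 < φ c) :
    ∃ p s, 0 < φ p ∧ 0 < s ∧ Metric.ball p s ⊆ Metric.closedBall c r ∧
      φ c * r ≤ 2 * (φ p * s) ∧ ∀ x ∈ Metric.ball p s, φ x ≤ 2 * φ p := by
  have hcc : c ∈ Metric.closedBall c r := Metric.mem_closedBall_self hr.le
  have hcont : ContinuousOn (fun x ↦ φ x * (r - dist x c)) (Metric.closedBall c r) :=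
    hφ.mul (by fun_prop)
  obtain ⟨p, hp, hmax⟩ := (isCompact_closedBall c r).exists_isMaxOn ⟨c, hcc⟩ hcont
  have hle : φ c * r ≤ φ p * (r - dist p c) := by simpa using hmax hcc
  have hpos : 0 < φ p * (r - dist p c) := (mul_pos hc hr).trans_le hle
  have hs : 0 < r - dist p c :=
    (sub_nonneg.2 hp).lt_of_ne' (right_ne_zero_of_mul hpos.ne')
  have hsub : Metric.ball p ((r - dist p c) / 2) ⊆ Metric.closedBall c r :=
    (Metric.ball_subset_ball' (by linarith)).trans Metric.ball_subset_closedBall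
  have hφp : 0 < φ p := pos_of_mul_pos_left hpos hs.le
  refine ⟨p, (r - dist p c) / 2, hφp, half_pos hs, hsub, by linarith, fun x hx ↦ ?_⟩
  have hdist : (r - dist p c) / 2 ≤ r - dist x c := by
    linarith [dist_triangle x p c, Metric.mem_ball.1 hx]
  by_contra! hlt
  have hmax' : φ x * (r - dist x c) ≤ φ p * (r - dist p c) := hmax (hsub hx)
  nlinarith

theorem norm_sub_sub_deriv_mul_le {F : ℂ → ℂ} {p z : ℂ} {s A : ℝ}
    (hF : DifferentiableOn ℂ F (Metric.ball p s))
    (hA : ∀ w ∈ Metric.ball p s, ‖deriv F w‖ ≤ A) (hz : z ∈ Metric.ball p s) :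
    ‖F z - F p - deriv F p * (z - p)‖ ≤ 2 * A / s * ‖z - p‖ ^ 2 := by
  have hs : 0 < s := Metric.pos_of_mem_ball hz
  have hmaps : Set.MapsTo (deriv F) (Metric.ball p s) (Metric.closedBall (deriv F p) (2 * A)) :=
    fun w hw ↦ by
      rw [mem_closedBall_iff_norm]
      linarith [norm_sub_le (deriv F w) (deriv F p), hA w hw, hA p (Metric.mem_ball_self hs)]
  have hsub : Metric.closedBall p (dist z p) ⊆ Metric.ball p s :=
    Metric.closedBall_subset_ball hz
  have hderiv : ∀ w ∈ Metric.closedBall p (dist z p),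
      ‖deriv F w - deriv F p‖ ≤ 2 * A / s * ‖z - p‖ := fun w hw ↦ by
    have hAs : 0 ≤ 2 * A / s := by
      have := (norm_nonneg _).trans (hA z hz)
      positivity
    rw [← dist_eq_norm, ← dist_eq_norm]
    exact (Complex.dist_le_div_mul_dist_of_mapsTo_ball (hF.deriv Metric.isOpen_ball) hmaps
      (hsub hw)).trans (mul_le_mul_of_nonneg_left hw hAs)
  have hlin : ∀ w ∈ Metric.closedBall p (dist z p),
      HasDerivWithinAt (fun w ↦ F w - deriv F p * w) (deriv F w - deriv F p)
        (Metric.closedBall p (dist z p)) w := fun w hw ↦ by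
    have hFw := (hF.differentiableAt (Metric.isOpen_ball.mem_nhds (hsub hw))).hasDerivAt
    simpa using (hFw.fun_sub ((hasDerivAt_id w).const_mul (deriv F p))).hasDerivWithinAt
  have hmvt := (convex_closedBall p (dist z p)).norm_image_sub_le_of_norm_hasDerivWithin_le
    hlin hderiv (Metric.mem_closedBall_self dist_nonneg) (Metric.mem_closedBall.2 le_rfl)
  calc ‖F z - F p - deriv F p * (z - p)‖
      = ‖F z - deriv F p * z - (F p - deriv F p * p)‖ := by ring_nf
    _ ≤ 2 * A / s * ‖z - p‖ * ‖z - p‖ := hmvt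
    _ = 2 * A / s * ‖z - p‖ ^ 2 := by ring

theorem ball_subset_image_ball_of_norm_deriv_le {F : ℂ → ℂ} {p : ℂ} {s : ℝ} (hs : 0 < s)
    (hF : DifferentiableOn ℂ F (Metric.ball p s)) (hp : deriv F p ≠ 0)
    (hle : ∀ z ∈ Metric.ball p s, ‖deriv F z‖ ≤ 2 * ‖deriv F p‖) :
    Metric.ball (F p) (‖deriv F p‖ * s / 32) ⊆ F '' Metric.ball p s := by
  have hsub : Metric.closedBall p (s / 8) ⊆ Metric.ball p s :=
    Metric.closedBall_subset_ball (by linarith)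
  have hsphere : ∀ z ∈ Metric.sphere p (s / 8), ‖deriv F p‖ * s / 16 ≤ ‖F z - F p‖ := by
    intro z hz
    have hzp : ‖z - p‖ = s / 8 := mem_sphere_iff_norm.1 hz
    have herr := norm_sub_sub_deriv_mul_le hF hle (hsub (Metric.sphere_subset_closedBall hz))
    have hlin := norm_sub_norm_le (deriv F p * (z - p)) (F z - F p)
    rw [norm_sub_rev _ (F z - F p), norm_mul, hzp] at hlin
    have heq : 2 * (2 * ‖deriv F p‖) / s * ‖z - p‖ ^ 2 = ‖deriv F p‖ * s / 16 := by
      rw [hzp]; field_simp; ring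
    linarith
  have hFp : HasDerivAt F (deriv F p) p :=
    (hF.differentiableAt (Metric.ball_mem_nhds p hs)).hasDerivAt
  have hne : ∃ᶠ z in 𝓝 p, F z ≠ F p :=
    (hFp.eventually_ne hp).frequently.filter_mono nhdsWithin_le_nhds
  have hdiff : DiffContOnCl ℂ F (Metric.ball p (s / 8)) :=
    (hF.mono (Metric.closure_ball_subset_closedBall.trans hsub)).diffContOnCl
  calc Metric.ball (F p) (‖deriv F p‖ * s / 32)
      = Metric.ball (F p) (‖deriv F p‖ * s / 16 / 2) := by ring_nf
    _ ⊆ F '' Metric.closedBall p (s / 8) :=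
        hdiff.ball_subset_image_closedBall (by positivity) hsphere hne
    _ ⊆ F '' Metric.ball p s := Set.image_mono hsub

theorem exists_ball_subset_image_ball {F : ℂ → ℂ} {c : ℂ} {R : ℝ}
    (hF : DifferentiableOn ℂ F (Metric.ball c R)) :
    ∃ w, Metric.ball w (‖deriv F c‖ * R / 128) ⊆ F '' Metric.ball c R := by
  rcases le_or_gt (‖deriv F c‖ * R) 0 with hle | hpos
  · exact ⟨0, by simp [Metric.ball_eq_empty.2 (show ‖deriv F c‖ * R / 128 ≤ 0 by linarith)]⟩
  have hR : 0 < R := pos_of_mul_pos_right hpos (norm_nonneg _)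
  have hsub : Metric.closedBall c (R / 2) ⊆ Metric.ball c R :=
    Metric.closedBall_subset_ball (half_lt_self hR)
  obtain ⟨p, s, hp, hs, hps, hmul, hle⟩ := exists_ball_forall_le_two_mul (half_pos hR)
    ((hF.deriv Metric.isOpen_ball).continuousOn.mono hsub).norm (pos_of_mul_pos_left hpos hR.le)
  have hpR : Metric.ball p s ⊆ Metric.ball c R := hps.trans hsub
  exact ⟨F p, (Metric.ball_subset_ball (by linarith)).trans
    ((ball_subset_image_ball_of_norm_deriv_le hs (hF.mono hpR) (norm_pos_iff.1 hp) hle).trans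
      (Set.image_mono hpR))⟩

theorem norm_deriv_mul_le_of_forall_exists_notMem_image {F : ℂ → ℂ} {c : ℂ} {R δ : ℝ}
    (hF : DifferentiableOn ℂ F (Metric.ball c R))
    (hδ : ∀ w, ∃ q ∈ Metric.ball w δ, q ∉ F '' Metric.ball c R) :
    ‖deriv F c‖ * R ≤ 128 * δ := by
  by_contra! hlt
  obtain ⟨w, hw⟩ := exists_ball_subset_image_ball hF
  obtain ⟨q, hq, hqF⟩ := hδ w
  exact hqF (hw (Metric.ball_subset_ball (by linarith) hq))

end Bloch

section Cosine

theorem differentiableOn_of_cexp {g : ℂ → ℂ} {U : Set ℂ} (hU : IsOpen U) (hg : ContinuousOn g U)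
    (hexp : DifferentiableOn ℂ (fun z ↦ Complex.exp (g z)) U) : DifferentiableOn ℂ g U :=
  fun z hz ↦ (HasDerivAt.of_comp_left (hg.continuousAt (hU.mem_nhds hz))
    (Complex.hasDerivAt_exp (g z)) (hexp.differentiableAt (hU.mem_nhds hz)).hasDerivAt
    (Complex.exp_ne_zero _) (.of_forall fun _ ↦ rfl)).differentiableAt.differentiableWithinAt

theorem exists_differentiableOn_cexp_eq {f : ℂ → ℂ} {U : Set ℂ} (hU : IsOpen U)
    (hsc : IsSimplyConnected U) (hf : DifferentiableOn ℂ f U) (h0 : ∀ z ∈ U, f z ≠ 0) :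
    ∃ g : ℂ → ℂ, DifferentiableOn ℂ g U ∧ ∀ z ∈ U, Complex.exp (g z) = f z := by
  obtain ⟨g, hg, hgf⟩ := Complex.exists_continuousOn_eqOn_exp_comp hsc hU hf.continuousOn
    (fun ⟨z, hz, hfz⟩ ↦ h0 z hz hfz)
  exact ⟨g, differentiableOn_of_cexp hU hg (hf.congr hgf), hgf⟩

theorem exists_differentiableOn_sq_eq {f : ℂ → ℂ} {U : Set ℂ} (hU : IsOpen U)
    (hsc : IsSimplyConnected U) (hf : DifferentiableOn ℂ f U) (h0 : ∀ z ∈ U, f z ≠ 0) :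
    ∃ g : ℂ → ℂ, DifferentiableOn ℂ g U ∧ ∀ z ∈ U, g z ^ 2 = f z := by
  obtain ⟨u, hu, huf⟩ := exists_differentiableOn_cexp_eq hU hsc hf h0
  refine ⟨fun z ↦ Complex.exp (u z / 2), by fun_prop, fun z hz ↦ ?_⟩
  rw [← Complex.exp_nat_mul, Nat.cast_ofNat, mul_div_cancel₀ _ two_ne_zero, huf z hz]

theorem exists_differentiableOn_cos_eq {f : ℂ → ℂ} {U : Set ℂ} (hU : IsOpen U)
    (hsc : IsSimplyConnected U) (hf : DifferentiableOn ℂ f U)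
    (hf' : ∀ z ∈ U, f z ^ 2 ≠ 1) :
    ∃ g : ℂ → ℂ, DifferentiableOn ℂ g U ∧ ∀ z ∈ U, Complex.cos (g z) = f z := by
  obtain ⟨r, hr, hrf⟩ := exists_differentiableOn_sq_eq hU hsc (f := fun z ↦ f z ^ 2 - 1)
    (by fun_prop) fun z hz ↦ sub_ne_zero.2 (hf' z hz)
  have hinv : ∀ z ∈ U, (f z + r z) * (f z - r z) = 1 := fun z hz ↦ by
    linear_combination -hrf z hz
  obtain ⟨u, hu, huf⟩ := exists_differentiableOn_cexp_eq hU hsc (hf.fun_add hr)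
    fun z hz ↦ left_ne_zero_of_mul_eq_one (hinv z hz)
  refine ⟨fun z ↦ u z / Complex.I, by fun_prop, fun z hz ↦ ?_⟩
  have hneg : Complex.exp (-u z) = f z - r z := by
    rw [Complex.exp_neg, huf z hz, inv_eq_of_mul_eq_one_right (hinv z hz)]
  rw [Complex.cos, neg_mul, div_mul_cancel₀ _ Complex.I_ne_zero, huf z hz, hneg]
  ring

theorem abs_im_le_norm_cos (w : ℂ) : |w.im| ≤ ‖Complex.cos w‖ := by
  have hpos : ‖Complex.exp (w * Complex.I)‖ = Real.exp (-w.im) := by simp [Complex.norm_exp]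
  have hneg : ‖Complex.exp (-w * Complex.I)‖ = Real.exp w.im := by simp [Complex.norm_exp]
  calc |w.im| ≤ Real.sinh |w.im| := Real.self_le_sinh_iff.2 (abs_nonneg _)
    _ = |‖Complex.exp (-w * Complex.I)‖ - ‖-Complex.exp (w * Complex.I)‖| / 2 := by
      rw [norm_neg, hpos, hneg, ← Real.abs_sinh, Real.sinh_eq, abs_div, abs_two]
    _ ≤ ‖Complex.exp (-w * Complex.I) - -Complex.exp (w * Complex.I)‖ / 2 := by
      gcongr
      exact abs_norm_sub_norm_le _ _
    _ = ‖Complex.cos w‖ := by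
      rw [Complex.cos, norm_div, Complex.norm_ofNat, sub_neg_eq_add, add_comm]

theorem norm_cos_le_exp_norm (w : ℂ) : ‖Complex.cos w‖ ≤ Real.exp ‖w‖ := by
  have hpos := Complex.norm_exp_le_exp_norm (w * Complex.I)
  have hneg := Complex.norm_exp_le_exp_norm (-w * Complex.I)
  simp only [norm_mul, norm_neg, Complex.norm_I, mul_one] at hpos hneg
  rw [Complex.cos, norm_div, Complex.norm_ofNat, div_le_iff₀ two_pos]
  linarith [norm_add_le (Complex.exp (w * Complex.I)) (Complex.exp (-w * Complex.I))]

theorem exists_norm_sub_int_mul_two_le (w : ℂ) :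
    ∃ k : ℤ, ‖w - k * 2‖ ≤ 1 + ‖Complex.cos (Real.pi * w)‖ := by
  refine ⟨round (w.re / 2), (Complex.norm_le_abs_re_add_abs_im _).trans (add_le_add ?_ ?_)⟩
  · have hround := abs_sub_round (w.re / 2)
    rw [abs_le] at hround ⊢
    simp only [Complex.sub_re, Complex.mul_re, Complex.intCast_re, Complex.intCast_im,
      Complex.re_ofNat, Complex.im_ofNat, mul_zero, sub_zero]
    constructor <;> linarith
  · calc |(w - round (w.re / 2) * 2).im| = |w.im| := by simp
      _ ≤ Real.pi * |w.im| :=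
        le_mul_of_one_le_left (abs_nonneg _) (by linarith [Real.pi_gt_three])
      _ = |(Real.pi * w).im| := by
        rw [Complex.im_ofReal_mul, abs_mul, abs_of_pos Real.pi_pos]
      _ ≤ ‖Complex.cos (Real.pi * w)‖ := abs_im_le_norm_cos _

theorem exists_differentiableOn_cos_pi_mul_eq {f : ℂ → ℂ} {U : Set ℂ} (hU : IsOpen U)
    (hsc : IsSimplyConnected U) (hf : DifferentiableOn ℂ f U) (hf' : ∀ z ∈ U, f z ^ 2 ≠ 1)
    {c : ℂ} (hc : c ∈ U) :
    ∃ g : ℂ → ℂ, DifferentiableOn ℂ g U ∧ (∀ z ∈ U, Complex.cos (Real.pi * g z) = f z) ∧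
      ‖g c‖ ≤ 1 + ‖f c‖ := by
  obtain ⟨G, hG, hGf⟩ := exists_differentiableOn_cos_eq hU hsc hf hf'
  have hpi : (Real.pi : ℂ) ≠ 0 := Complex.ofReal_ne_zero.2 Real.pi_ne_zero
  obtain ⟨k, hk⟩ := exists_norm_sub_int_mul_two_le (G c / Real.pi)
  rw [mul_div_cancel₀ _ hpi, hGf c hc] at hk
  refine ⟨fun z ↦ G z / Real.pi - k * 2, by fun_prop, fun z hz ↦ ?_, hk⟩
  rw [← hGf z hz, ← Complex.cos_sub_int_mul_two_pi (G z) k]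
  congr 1
  field_simp

end Cosine

section Net

theorem exists_cosh_pi_mul_eq_intCast {y : ℝ} (hy : 0 ≤ y) :
    ∃ t ∈ Set.Icc y (y + 1), ∃ k : ℤ, Real.cosh (Real.pi * t) = k := by
  have hcosh : Real.cosh (Real.pi * y) + 1 ≤ Real.cosh (Real.pi * (y + 1)) := by
    have h1 : 1 ≤ Real.cosh (Real.pi * y) := Real.one_le_cosh _
    have h2 : 0 ≤ Real.sinh (Real.pi * y) := Real.sinh_nonneg_iff.2 (by positivity)
    have h3 : Real.pi ≤ Real.sinh Real.pi := Real.self_le_sinh_iff.2 Real.pi_pos.le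
    have h4 : Real.sinh Real.pi < Real.cosh Real.pi := Real.sinh_lt_cosh _
    rw [mul_add_one, Real.cosh_add]
    nlinarith [Real.pi_gt_three]
  obtain ⟨t, ht, hk⟩ := intermediate_value_Icc (le_add_of_nonneg_right zero_le_one)
    (show ContinuousOn (fun t ↦ Real.cosh (Real.pi * t)) (Set.Icc y (y + 1)) by fun_prop)
    ⟨Int.le_ceil (Real.cosh (Real.pi * y)), (Int.ceil_lt_add_one _).le.trans hcosh⟩
  exact ⟨t, ht, _, hk⟩

theorem exists_mem_ball_cos_pi_mul_eq_intCast (w : ℂ) :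
    ∃ q ∈ Metric.ball w 2, ∃ k : ℤ, Complex.cos (Real.pi * q) = k := by
  wlog hw : 0 ≤ w.im generalizing w
  · obtain ⟨q, hq, k, hk⟩ := this (-w) (by rw [Complex.neg_im]; linarith)
    refine ⟨-q, ?_, k, by rw [mul_neg, Complex.cos_neg, hk]⟩
    rwa [Metric.mem_ball, ← dist_neg_neg, neg_neg]
  obtain ⟨t, ht, k, hk⟩ := exists_cosh_pi_mul_eq_intCast hw
  obtain ⟨j, hj⟩ : ∃ j : ℤ, Complex.cos (round w.re * Real.pi) = j := by
    rcases eq_or_eq_neg_of_abs_eq (Real.abs_cos_int_mul_pi (round w.re)) with h | h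
    · exact ⟨1, by exact_mod_cast congrArg Complex.ofReal h⟩
    · exact ⟨-1, by exact_mod_cast congrArg Complex.ofReal h⟩
  refine ⟨round w.re + t * Complex.I, ?_, j * k, ?_⟩
  · have hre : |round w.re - w.re| ≤ 1 / 2 := abs_sub_comm w.re _ ▸ abs_sub_round w.re
    have him : |t - w.im| ≤ 1 := abs_le.2 ⟨by linarith [ht.1], by linarith [ht.2]⟩
    calc dist (round w.re + t * Complex.I) w
        ≤ |round w.re - w.re| + |t - w.im| := by
          simpa [dist_eq_norm] using
            Complex.norm_le_abs_re_add_abs_im (round w.re + t * Complex.I - w)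
      _ < 2 := by linarith
  · calc Complex.cos (Real.pi * (round w.re + t * Complex.I))
        = Complex.cos (round w.re * Real.pi + (Real.pi * t : ℝ) * Complex.I) := by
          push_cast; ring_nf
      _ = (j * k : ℤ) := by
          rw [Complex.cos_add_mul_I, Complex.sin_int_mul_pi, hj, ← Complex.ofReal_cosh, hk]
          push_cast; ring

end Net

section Schottky

theorem ne_intCast_of_cos_pi_mul_sq_ne_one {w : ℂ} (hw : Complex.cos (Real.pi * w) ^ 2 ≠ 1)
    (k : ℤ) : w ≠ k := by
  rintro rfl
  apply hw
  rw [← Complex.sin_sq_add_cos_sq (Real.pi * k), mul_comm, Complex.sin_int_mul_pi]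
  ring

theorem exists_cos_pi_mul_cos_pi_mul_eq {f : ℂ → ℂ} {U : Set ℂ} (hU : IsOpen U)
    (hsc : IsSimplyConnected U) (hf : DifferentiableOn ℂ f U) (h0 : ∀ z ∈ U, f z ≠ 0)
    (h1 : ∀ z ∈ U, f z ≠ 1) {c : ℂ} (hc : c ∈ U) :
    ∃ F : ℂ → ℂ, DifferentiableOn ℂ F U ∧
      (∀ z ∈ U, Complex.cos (Real.pi * Complex.cos (Real.pi * F z)) = 2 * f z - 1) ∧
      (∀ z ∈ U, ∀ k : ℤ, Complex.cos (Real.pi * F z) ≠ k) ∧ ‖F c‖ ≤ 3 + 2 * ‖f c‖ := by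
  have hsq : ∀ z ∈ U, (2 * f z - 1) ^ 2 ≠ 1 := fun z hz h ↦ by
    have hmul : f z * (f z - 1) = 0 := by linear_combination h / 4
    exact (mul_ne_zero (h0 z hz) (sub_ne_zero.2 (h1 z hz))) hmul
  obtain ⟨G, hG, hGf, hGc⟩ := exists_differentiableOn_cos_pi_mul_eq hU hsc
    (f := fun z ↦ 2 * f z - 1) (by fun_prop) hsq hc
  have hGk : ∀ z ∈ U, ∀ k : ℤ, G z ≠ k := fun z hz ↦
    ne_intCast_of_cos_pi_mul_sq_ne_one (hGf z hz ▸ hsq z hz)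
  obtain ⟨F, hF, hFG, hFc⟩ := exists_differentiableOn_cos_pi_mul_eq hU hsc hG
    (fun z hz h ↦ (sq_eq_one_iff.1 h).elim
      (by simpa using hGk z hz 1) (by simpa using hGk z hz (-1))) hc
  refine ⟨F, hF, fun z hz ↦ by rw [hFG z hz, hGf z hz], fun z hz ↦ hFG z hz ▸ hGk z hz, ?_⟩
  have hfc : ‖2 * f c - 1‖ ≤ 2 * ‖f c‖ + 1 := by
    simpa using norm_sub_le (2 * f c) 1
  linarith

theorem norm_sub_le_of_cos_pi_mul_ne_intCast {F : ℂ → ℂ} {c z : ℂ} {R : ℝ}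
    (hF : DifferentiableOn ℂ F (Metric.ball c R))
    (hk : ∀ z ∈ Metric.ball c R, ∀ k : ℤ, Complex.cos (Real.pi * F z) ≠ k)
    (hz : z ∈ Metric.closedBall c (R / 2)) : ‖F z - F c‖ ≤ 256 := by
  obtain hR | hR : 0 = R / 2 ∨ 0 < R / 2 := (dist_nonneg.trans hz).eq_or_lt
  · rw [Metric.mem_closedBall, ← hR, dist_le_zero] at hz
    simp [hz]
  have hR' : 0 < R := by linarith
  have hsub : ∀ x ∈ Metric.closedBall c (R / 2), Metric.ball x (R / 2) ⊆ Metric.ball c R :=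
    fun x hx ↦ Metric.ball_subset_ball' (by linarith [Metric.mem_closedBall.1 hx])
  have hderiv : ∀ x ∈ Metric.closedBall c (R / 2), ‖deriv F x‖ ≤ 512 / R := fun x hx ↦ by
    have hbloch := norm_deriv_mul_le_of_forall_exists_notMem_image (δ := 2) (hF.mono (hsub x hx))
      fun w ↦ by
        obtain ⟨q, hq, k, hqk⟩ := exists_mem_ball_cos_pi_mul_eq_intCast w
        exact ⟨q, hq, fun ⟨y, hy, hyq⟩ ↦ hk y (hsub x hx hy) k (hyq ▸ hqk)⟩
    rw [le_div_iff₀ hR']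
    linarith
  have hmvt := (convex_closedBall c (R / 2)).norm_image_sub_le_of_norm_deriv_le
    (fun x hx ↦ hF.differentiableAt
      (Metric.isOpen_ball.mem_nhds (hsub x hx (Metric.mem_ball_self hR))))
    hderiv (Metric.mem_closedBall_self hR.le) hz
  calc ‖F z - F c‖ ≤ 512 / R * ‖z - c‖ := hmvt
    _ ≤ 512 / R * (R / 2) := by
      gcongr
      exact mem_closedBall_iff_norm.1 hz
    _ = 256 := by
      field_simp
      norm_num

theorem norm_cos_pi_mul_le {w : ℂ} {r : ℝ} (hw : ‖w‖ ≤ r) :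
    ‖Complex.cos (Real.pi * w)‖ ≤ Real.exp (Real.pi * r) := by
  refine (norm_cos_le_exp_norm _).trans (Real.exp_le_exp.2 ?_)
  rw [norm_mul, Complex.norm_of_nonneg Real.pi_pos.le]
  gcongr

/-- Upper bound in Schottky's theorem: the modulus on the half disc of a function
omitting `0` and `1` whose value at the centre has modulus at most `M`. -/
noncomputable def schottkyBound (M : ℝ) : ℝ :=
  1 + Real.exp (Real.pi * Real.exp (Real.pi * (259 + 2 * M)))

theorem norm_le_schottkyBound_of_disc {f : ℂ → ℂ} {c z : ℂ} {R M : ℝ}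
    (hf : DifferentiableOn ℂ f (Metric.ball c R)) (h0 : ∀ z ∈ Metric.ball c R, f z ≠ 0)
    (h1 : ∀ z ∈ Metric.ball c R, f z ≠ 1) (hM : ‖f c‖ ≤ M) (hR : 0 < R)
    (hz : z ∈ Metric.closedBall c (R / 2)) : ‖f z‖ ≤ schottkyBound M := by
  have hc : c ∈ Metric.ball c R := Metric.mem_ball_self hR
  have hsc : IsSimplyConnected (Metric.ball c R) := by
    have := (convex_ball c R).contractibleSpace ⟨c, hc⟩
    exact SimplyConnectedSpace.ofContractible _
  obtain ⟨F, hF, hFf, hFk, hFc⟩ :=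
    exists_cos_pi_mul_cos_pi_mul_eq Metric.isOpen_ball hsc hf h0 h1 hc
  have hzR : z ∈ Metric.ball c R := Metric.closedBall_subset_ball (half_lt_self hR) hz
  have hFz : ‖F z‖ ≤ 259 + 2 * M := by
    linarith [norm_sub_norm_le (F z) (F c), norm_sub_le_of_cos_pi_mul_ne_intCast hF hFk hz]
  have h2f : ‖2 * f z - 1‖ ≤ Real.exp (Real.pi * Real.exp (Real.pi * (259 + 2 * M))) :=
    hFf z hzR ▸ norm_cos_pi_mul_le (norm_cos_pi_mul_le hFz)
  have htri : 2 * ‖f z‖ ≤ ‖2 * f z - 1‖ + 1 := by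
    simpa using norm_add_le (2 * f z - 1) 1
  rw [schottkyBound]
  linarith [norm_nonneg (2 * f z - 1)]

variable {E : Type*} [NormedAddCommGroup E] [NormedSpace ℂ E]

theorem norm_le_schottkyBound {f : E → ℂ} {x y : E} {R M : ℝ}
    (hf : DifferentiableOn ℂ f (Metric.ball x R)) (h0 : ∀ w ∈ Metric.ball x R, f w ≠ 0)
    (h1 : ∀ w ∈ Metric.ball x R, f w ≠ 1) (hM : ‖f x‖ ≤ M) (hy : y ∈ Metric.ball x (R / 2)) :
    ‖f y‖ ≤ schottkyBound M := by
  let ℓ : ℂ → E := fun t ↦ x + t • (y - x)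
  have hℓ : Set.MapsTo ℓ (Metric.ball 0 2) (Metric.ball x R) := fun t ht ↦ by
    rw [mem_ball_zero_iff] at ht
    rw [mem_ball_iff_norm] at hy ⊢
    simp only [ℓ, add_sub_cancel_left, norm_smul]
    nlinarith [norm_nonneg (y - x), norm_nonneg t]
  have hdisc := norm_le_schottkyBound_of_disc (f := f ∘ ℓ) (z := 1)
    (hf.comp (by fun_prop) hℓ) (fun t ht ↦ h0 _ (hℓ ht)) (fun t ht ↦ h1 _ (hℓ ht))
    (by simpa [ℓ] using hM) two_pos (by simp)
  simpa [ℓ] using hdisc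

end Schottky

section Montel

/-- The family `H` is locally bounded on `Ω`, uniformly in the index: the hypothesis of
Montel's theorem. The neighbourhoods are taken in the ambient space, which is harmless for
open `Ω`. -/
def LocallyUniformlyBoundedOn {ι X : Type*} [TopologicalSpace X] (H : ι → X → ℂ) (Ω : Set X) :
    Prop :=
  ∀ z ∈ Ω, ∃ B, ∀ᶠ x in 𝓝 z, ∀ j, ‖H j x‖ ≤ B

theorem LocallyUniformlyBoundedOn.isBounded_range {ι X : Type*} [TopologicalSpace X]
    {H : ι → X → ℂ} {Ω : Set X} {z : X} (hb : LocallyUniformlyBoundedOn H Ω) (hz : z ∈ Ω) :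
    Bornology.IsBounded (Set.range (H · z)) := by
  obtain ⟨B, hB⟩ := hb z hz
  exact isBounded_iff_forall_norm_le.2 ⟨B, Set.forall_mem_range.2 hB.self_of_nhds⟩

variable {ι : Type*} {E : Type*} [NormedAddCommGroup E] [NormedSpace ℂ E]

theorem norm_sub_sub_fderiv_le {f : E → ℂ} {c z : E} {r B : ℝ}
    (hf : DifferentiableOn ℂ f (Metric.ball c r))
    (hB : Set.MapsTo f (Metric.ball c r) (Metric.closedBall (f c) B))
    (hz : z ∈ Metric.ball c r) :
    ‖f z - f c - fderiv ℂ f c (z - c)‖ ≤ 2 * B * (dist z c / r) ^ 2 := by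
  have hr : 0 < r := Metric.pos_of_mem_ball hz
  have hc : HasFDerivAt f (fderiv ℂ f c) c :=
    (hf.differentiableAt (Metric.ball_mem_nhds c hr)).hasFDerivAt
  have hD : ‖fderiv ℂ f c‖ ≤ B / r := Complex.norm_fderiv_le_div_of_mapsTo_ball hf hB hr
  have hmaps : Set.MapsTo (fun w ↦ f w - fderiv ℂ f c w) (Metric.ball c r)
      (Metric.closedBall (f c - fderiv ℂ f c c) (2 * B)) := fun w hw ↦ by
    rw [mem_closedBall_iff_norm, sub_sub_sub_comm, ← map_sub]
    calc ‖f w - f c - fderiv ℂ f c (w - c)‖ ≤ ‖f w - f c‖ + ‖fderiv ℂ f c (w - c)‖ :=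
        norm_sub_le _ _
      _ ≤ B + B / r * r := add_le_add (mem_closedBall_iff_norm.1 (hB hw))
        ((fderiv ℂ f c).le_of_opNorm_le_of_le hD (mem_ball_iff_norm.1 hw).le)
      _ = 2 * B := by
        field_simp
        ring
  have hlittle : (fun w ↦ f w - fderiv ℂ f c w - (f c - fderiv ℂ f c c))
      =o[𝓝 c] fun w ↦ ‖w - c‖ ^ 1 := by
    simpa only [pow_one, sub_sub_sub_comm, ← map_sub] using hc.isLittleO.norm_right
  have hschwarz := Complex.dist_le_mul_div_pow_of_mapsTo_ball_of_isLittleO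
    (hf.fun_sub (fderiv ℂ f c).differentiable.differentiableOn) hmaps hlittle hz
  rwa [dist_eq_norm, sub_sub_sub_comm, ← map_sub] at hschwarz

namespace LocallyUniformlyBoundedOn

variable {H : ι → E → ℂ} {Ω : Set E} {z : E}

theorem exists_differentiableOn_mapsTo_ball (hb : LocallyUniformlyBoundedOn H Ω)
    (hΩ : IsOpen Ω) (hH : ∀ j, DifferentiableOn ℂ (H j) Ω) (hz : z ∈ Ω) :
    ∃ r > 0, ∃ B, ∀ j, DifferentiableOn ℂ (H j) (Metric.ball z r) ∧
      Set.MapsTo (H j) (Metric.ball z r) (Metric.closedBall (H j z) B) := by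
  obtain ⟨B, hB⟩ := hb z hz
  obtain ⟨r, hr, hball⟩ := Metric.eventually_nhds_iff_ball.1 (hB.and (hΩ.mem_nhds hz))
  refine ⟨r, hr, B + B, fun j ↦ ⟨(hH j).mono fun w hw ↦ (hball w hw).2, fun w hw ↦ ?_⟩⟩
  rw [mem_closedBall_iff_norm]
  exact norm_sub_le_of_le ((hball w hw).1 j) (hB.self_of_nhds j)

theorem equicontinuousAt (hb : LocallyUniformlyBoundedOn H Ω) (hΩ : IsOpen Ω)
    (hH : ∀ j, DifferentiableOn ℂ (H j) Ω) (hz : z ∈ Ω) : EquicontinuousAt H z := by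
  obtain ⟨r, hr, B, hrB⟩ := hb.exists_differentiableOn_mapsTo_ball hΩ hH hz
  refine Metric.equicontinuousAt_of_continuity_modulus (fun x ↦ B / r * dist x z) ?_ H ?_
  · exact (by fun_prop : Continuous fun x ↦ B / r * dist x z).tendsto' _ _ (by simp)
  · filter_upwards [Metric.ball_mem_nhds z hr] with x hx j
    rw [dist_comm]
    exact Complex.dist_le_div_mul_dist_of_mapsTo_ball (hrB j).1 (hrB j).2 hx

theorem differentiableOn_of_tendsto (hb : LocallyUniformlyBoundedOn H Ω) (hΩ : IsOpen Ω)
    (hH : ∀ j, DifferentiableOn ℂ (H j) Ω) {l : Filter ι} [l.NeBot] {g : E → ℂ}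
    (hg : ∀ z ∈ Ω, Tendsto (H · z) l (𝓝 (g z))) : DifferentiableOn ℂ g Ω := by
  intro z hz
  obtain ⟨r, hr, B, hrB⟩ := hb.exists_differentiableOn_mapsTo_ball hΩ hH hz
  let D : ι → E →L[ℂ] ℂ := fun j ↦ fderiv ℂ (H j) z
  have hD : Bornology.IsBounded (Set.range D) :=
    isBounded_iff_forall_norm_le.2 ⟨B / r, Set.forall_mem_range.2 fun j ↦
      Complex.norm_fderiv_le_div_of_mapsTo_ball (hrB j).1 (hrB j).2 hr⟩
  -- Along an ultrafilter, compactness alone makes the derivatives converge pointwise.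
  let u := Ultrafilter.of l
  obtain ⟨L', -, hL'⟩ := isCompact_iff_ultrafilter_le_nhds'.1
    (ContinuousLinearMap.isCompact_closure_image_coe_of_bounded hD)
    (u.map fun j ↦ ⇑(D j))
    (Ultrafilter.mem_map.2 <| univ_mem' fun j ↦ subset_closure ⟨_, ⟨j, rfl⟩, rfl⟩)
  let L : E →L[ℂ] ℂ := .ofTendstoOfBoundedRange L' D hL' hD
  have hL : ∀ v, Tendsto (D · v) u (𝓝 (L v)) := tendsto_pi_nhds.1 hL'
  have hbound : ∀ᶠ x in 𝓝 z, ‖g x - g z - L (x - z)‖ ≤ 2 * B / r ^ 2 * ‖x - z‖ ^ 2 := by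
    filter_upwards [Metric.ball_mem_nhds z hr, hΩ.mem_nhds hz] with x hx hxΩ
    refine le_of_tendsto ((((hg x hxΩ).mono_left (Ultrafilter.of_le l)).sub
      ((hg z hz).mono_left (Ultrafilter.of_le l))).sub (hL (x - z))).norm
      (Eventually.of_forall fun j ↦ ?_)
    refine (norm_sub_sub_fderiv_le (hrB j).1 (hrB j).2 hx).trans_eq ?_
    rw [div_pow, dist_eq_norm, mul_div_assoc', mul_div_right_comm]
  have hderiv : HasFDerivAt g L z := .of_isLittleO <|
    (Asymptotics.IsBigO.of_bound _ (hbound.mono fun x hx ↦ by simpa using hx)).trans_isLittleO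
      (Asymptotics.isLittleO_pow_sub_sub z one_lt_two)
  exact hderiv.differentiableAt.differentiableWithinAt

end LocallyUniformlyBoundedOn

theorem exists_strictMono_forall_exists_tendsto {X α : Type*} [PseudoMetricSpace α]
    [ProperSpace α] {H : ℕ → X → α} {D : Set X} (hD : D.Countable)
    (hb : ∀ x ∈ D, Bornology.IsBounded (Set.range (H · x))) :
    ∃ φ : ℕ → ℕ, StrictMono φ ∧ ∀ x ∈ D, ∃ y, Tendsto (fun j ↦ H (φ j) x) atTop (𝓝 y) := by
  have := hD.to_subtype
  have hK : IsCompact (Set.univ.pi fun x : D ↦ closure (Set.range (H · x))) :=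
    isCompact_univ_pi fun x ↦ (hb x x.2).isCompact_closure
  obtain ⟨y, -, φ, hφ, hy⟩ := hK.tendsto_subseq (x := fun j (x : D) ↦ H j x)
    fun j x _ ↦ subset_closure ⟨j, rfl⟩
  exact ⟨φ, hφ, fun x hx ↦ ⟨y ⟨x, hx⟩, tendsto_pi_nhds.1 hy ⟨x, hx⟩⟩⟩

theorem exists_tendsto_of_equicontinuousAt_of_mem_closure {X α : Type*} [TopologicalSpace X]
    [PseudoMetricSpace α] [CompleteSpace α] {H : ℕ → X → α} {D : Set X} {x : X}
    (hH : EquicontinuousAt H x) (hD : ∀ y ∈ D, ∃ l, Tendsto (H · y) atTop (𝓝 l))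
    (hx : x ∈ closure D) : ∃ l, Tendsto (H · x) atTop (𝓝 l) := by
  refine cauchySeq_tendsto_of_complete (Metric.cauchySeq_iff'.2 fun ε hε ↦ ?_)
  obtain ⟨y, hy, hyD⟩ := mem_closure_iff_nhds.1 hx _
    (Metric.equicontinuousAt_iff_right.1 hH (ε / 3) (by positivity))
  obtain ⟨l, hl⟩ := hD y hyD
  obtain ⟨N, hN⟩ := Metric.cauchySeq_iff'.1 hl.cauchySeq (ε / 3) (by positivity)
  refine ⟨N, fun j hj ↦ ?_⟩
  calc dist (H j x) (H N x)
      ≤ dist (H j x) (H j y) + dist (H j y) (H N y) + dist (H N y) (H N x) := dist_triangle4 ..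
    _ < ε / 3 + ε / 3 + ε / 3 := by
      gcongr
      · exact hy j
      · exact hN j hj
      · exact dist_comm (H N y) _ ▸ hy N
    _ = ε := by ring

theorem tendstoUniformlyOn_of_equicontinuousOn {X α : Type*} [TopologicalSpace X]
    [UniformSpace α] {H : ι → X → α} {g : X → α} {l : Filter ι} {K : Set X} (hK : IsCompact K)
    (hH : EquicontinuousOn H K) (hg : ∀ x ∈ K, Tendsto (H · x) l (𝓝 (g x))) :
    TendstoUniformlyOn H g l K := by
  have h := (EquicontinuousOn.tendsto_uniformOnFun_iff_pi' (𝔖 := {K}) (by simpa) (by simpa) l g).2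
    (tendsto_pi_nhds.2 fun x ↦ hg x (by simpa using x.2))
  exact UniformOnFun.tendsto_iff_tendstoUniformlyOn.1 h K rfl

theorem LocallyUniformlyBoundedOn.exists_strictMono_tendstoUniformlyOn
    [TopologicalSpace.SeparableSpace E] {H : ℕ → E → ℂ} {Ω : Set E}
    (hb : LocallyUniformlyBoundedOn H Ω) (hΩ : IsOpen Ω)
    (hH : ∀ j, DifferentiableOn ℂ (H j) Ω) :
    ∃ (φ : ℕ → ℕ) (g : E → ℂ), StrictMono φ ∧ DifferentiableOn ℂ g Ω ∧
      ∀ K ⊆ Ω, IsCompact K → TendstoUniformlyOn (fun j ↦ H (φ j)) g atTop K := by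
  obtain ⟨D, hDΩ, hDc, hΩD⟩ :=
    (TopologicalSpace.IsSeparable.of_separableSpace Ω).exists_countable_dense_subset
  obtain ⟨φ, hφ, hφD⟩ := exists_strictMono_forall_exists_tendsto hDc fun x hx ↦
    hb.isBounded_range (hDΩ hx)
  have hequi : ∀ x ∈ Ω, EquicontinuousAt (H ∘ φ) x := fun x hx ↦
    (hb.equicontinuousAt hΩ hH hx).comp φ
  have hlim : ∀ x ∈ Ω, ∃ y, Tendsto (fun j ↦ H (φ j) x) atTop (𝓝 y) := fun x hx ↦
    exists_tendsto_of_equicontinuousAt_of_mem_closure (hequi x hx) hφD (hΩD hx)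
  choose! g hg using hlim
  have hgφ : ∀ x ∈ Ω, Tendsto (H · x) (map φ atTop) (𝓝 (g x)) := hg
  exact ⟨φ, g, hφ, hb.differentiableOn_of_tendsto hΩ hH hgφ, fun K hKΩ hK ↦
    tendstoUniformlyOn_of_equicontinuousOn hK
      (fun x hx ↦ (hequi x (hKΩ hx)).equicontinuousWithinAt K) fun x hx ↦ hg x (hKΩ hx)⟩

end Montel

section Normality

/-- Harnack-type estimate for the family `F`: near every point of `Ω`, a bound for `f ∈ F` at
one point gives a bound, independent of `f`, at all other points. Schottky's theorem provides
it for the functions omitting `0` and `1`, whence the name. -/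
def IsSchottkyFamilyOn {X : Type*} [TopologicalSpace X] (F : Set (X → ℂ)) (Ω : Set X) : Prop :=
  ∀ z ∈ Ω, ∃ U ∈ 𝓝 z, ∀ M, ∃ C, ∀ f ∈ F, ∀ x ∈ U, ∀ y ∈ U, ‖f x‖ ≤ M → ‖f y‖ ≤ C

namespace IsSchottkyFamilyOn

variable {X : Type*} [TopologicalSpace X] {F G : Set (X → ℂ)} {Ω : Set X}

theorem exists_bound_of_isPreconnected (hF : IsSchottkyFamilyOn F Ω) (hΩ : IsPreconnected Ω)
    {x y : X} (hx : x ∈ Ω) (hy : y ∈ Ω) (M : ℝ) : ∃ C, ∀ f ∈ F, ‖f x‖ ≤ M → ‖f y‖ ≤ C := by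
  refine hΩ.induction₂' (fun x y ↦ ∀ M, ∃ C, ∀ f ∈ F, ‖f x‖ ≤ M → ‖f y‖ ≤ C)
    (fun z hz ↦ ?_) (fun x y w _ _ _ hxy hyw M ↦ ?_) hx hy M
  · obtain ⟨U, hU, hUF⟩ := hF z hz
    have hzU := mem_of_mem_nhds hU
    filter_upwards [mem_nhdsWithin_of_mem_nhds hU] with y hyU
    exact ⟨fun M ↦ (hUF M).imp fun C hC f hf ↦ hC f hf z hzU y hyU,
      fun M ↦ (hUF M).imp fun C hC f hf ↦ hC f hf y hyU z hzU⟩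
  · obtain ⟨C, hC⟩ := hxy M
    exact (hyw C).imp fun C' hC' f hf h ↦ hC' f hf (hC f hf h)

theorem locallyUniformlyBoundedOn {ι : Type*} {H : ι → X → ℂ} {z : X} {M : ℝ}
    (hF : IsSchottkyFamilyOn F Ω) (hΩ : IsPreconnected Ω) (hH : ∀ j, H j ∈ F) (hz : z ∈ Ω)
    (hM : ∀ j, ‖H j z‖ ≤ M) : LocallyUniformlyBoundedOn H Ω := by
  intro w hw
  obtain ⟨U, hU, hUF⟩ := hF w hw
  obtain ⟨C, hC⟩ := hF.exists_bound_of_isPreconnected hΩ hz hw M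
  obtain ⟨B, hB⟩ := hUF C
  exact ⟨B, mem_of_superset hU fun x hx j ↦
    hB _ (hH j) w (mem_of_mem_nhds hU) x hx (hC _ (hH j) (hM j))⟩

theorem eventually_forall_lt_norm {ι : Type*} {H : ι → X → ℂ} {l : Filter ι} {K : Set X}
    (hF : IsSchottkyFamilyOn F Ω) (hH : ∀ j, H j ∈ F)
    (hlim : ∀ z ∈ Ω, Tendsto (fun j ↦ ‖H j z‖) l atTop) (hKΩ : K ⊆ Ω) (hK : IsCompact K)
    (M : ℝ) : ∀ᶠ j in l, ∀ z ∈ K, M < ‖H j z‖ := by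
  refine hK.induction_on (p := fun t ↦ ∀ᶠ j in l, ∀ z ∈ t, M < ‖H j z‖) (by simp)
    (fun s t hst ht ↦ ht.mono fun j hj z hz ↦ hj z (hst hz))
    (fun s t hs ht ↦ (hs.and ht).mono fun j hj z hz ↦ hz.elim (hj.1 z) (hj.2 z)) fun z hz ↦ ?_
  obtain ⟨U, hU, hUF⟩ := hF z (hKΩ hz)
  obtain ⟨C, hC⟩ := hUF M
  refine ⟨U, mem_nhdsWithin_of_mem_nhds hU, ?_⟩
  filter_upwards [(hlim z (hKΩ hz)).eventually_gt_atTop C] with j hj x hx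
  contrapose! hj
  exact hC _ (hH j) x hx z (mem_of_mem_nhds hU) hj

theorem of_affine {b c : X → ℂ} (hG : IsSchottkyFamilyOn G Ω) (hΩ : IsOpen Ω)
    (hb : ContinuousOn b Ω) (hc : ContinuousOn c Ω) (hc0 : ∀ z ∈ Ω, c z ≠ 0)
    (hFG : ∀ f ∈ F, (fun z ↦ (f z - b z) / c z) ∈ G) : IsSchottkyFamilyOn F Ω := by
  intro z hz
  have hΩz := hΩ.mem_nhds hz
  have hbound : ∀ {g : X → ℂ}, ContinuousOn g Ω → ∀ᶠ x in 𝓝 z, ‖g x‖ ≤ ‖g z‖ + 1 := fun hg ↦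
    (hg.continuousAt hΩz).norm.eventually_le_const (lt_add_one _)
  obtain ⟨U, hU, hUG⟩ := hG z hz
  refine ⟨_, inter_mem (inter_mem hU hΩz)
    (((hbound hb).and (hbound hc)).and (hbound (hc.inv₀ hc0))), fun M ↦ ?_⟩
  obtain ⟨C, hC⟩ := hUG ((M + (‖b z‖ + 1)) * (‖(c z)⁻¹‖ + 1))
  refine ⟨(‖c z‖ + 1) * C + (‖b z‖ + 1), fun f hf x hx y hy hfx ↦ ?_⟩
  obtain ⟨⟨hxU, -⟩, ⟨hbx, -⟩, hcx⟩ := hx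
  obtain ⟨⟨hyU, hyΩ⟩, ⟨hby, hcy⟩, -⟩ := hy
  have hquot : ‖(f x - b x) / c x‖ ≤ (M + (‖b z‖ + 1)) * (‖(c z)⁻¹‖ + 1) := by
    rw [div_eq_mul_inv]
    exact norm_mul_le_of_le (norm_sub_le_of_le hfx hbx) hcx
  have hrec : f y = c y * ((f y - b y) / c y) + b y := by
    rw [mul_div_cancel₀ _ (hc0 y hyΩ), sub_add_cancel]
  rw [hrec]
  exact norm_add_le_of_le (norm_mul_le_of_le hcy (hC _ (hFG f hf) x hxU y hyU hquot)) hby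

end IsSchottkyFamilyOn

theorem isSchottkyFamilyOn_setOf_ne_zero_and_ne_one {E : Type*} [NormedAddCommGroup E]
    [NormedSpace ℂ E] {Ω : Set E} (hΩ : IsOpen Ω) :
    IsSchottkyFamilyOn {f : E → ℂ | DifferentiableOn ℂ f Ω ∧ ∀ z ∈ Ω, f z ≠ 0 ∧ f z ≠ 1} Ω := by
  intro z hz
  obtain ⟨R, hR, hRΩ⟩ := Metric.isOpen_iff.1 hΩ z hz
  refine ⟨Metric.ball z (R / 5), Metric.ball_mem_nhds z (by positivity), fun M ↦
    ⟨schottkyBound M, fun f hf x hx y hy hM ↦ ?_⟩⟩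
  rw [Metric.mem_ball] at hx hy
  have hsub : Metric.ball x (4 * R / 5) ⊆ Ω :=
    (Metric.ball_subset_ball' (by linarith)).trans hRΩ
  refine norm_le_schottkyBound (hf.1.mono hsub) (fun w hw ↦ (hf.2 w (hsub hw)).1)
    (fun w hw ↦ (hf.2 w (hsub hw)).2) hM ?_
  rw [Metric.mem_ball]
  linarith [dist_triangle_right y x z]

theorem chordal_le_dist (a b : ℂ) : chordal a b ≤ dist a b := by
  have hsqrt : ∀ z : ℂ, 1 ≤ Real.sqrt (1 + ‖z‖ ^ 2) := fun z ↦
    Real.one_le_sqrt.2 (le_add_of_nonneg_right (sq_nonneg _))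
  exact div_le_self dist_nonneg (one_le_mul_of_one_le_of_one_le (hsqrt a) (hsqrt b))

variable {E : Type} [NormedAddCommGroup E] [NormedSpace ℂ E]
  [TopologicalSpace.SeparableSpace E] {Ω : Set E}

theorem IsSchottkyFamilyOn.isNormalFamily {F : Set (E → ℂ)} (hF : IsSchottkyFamilyOn F Ω)
    (hΩ : IsOpen Ω) (hconn : IsPreconnected Ω) (hhol : ∀ f ∈ F, DifferentiableOn ℂ f Ω) :
    IsNormalFamily Ω F := by
  intro s hs
  by_cases hlim : ∀ z ∈ Ω, Tendsto (fun j ↦ ‖s j z‖) atTop atTop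
  · exact ⟨id, strictMono_id, .inr fun K hKΩ hK M ↦
      eventually_atTop.1 (hF.eventually_forall_lt_norm hs hlim hKΩ hK M)⟩
  push Not at hlim
  obtain ⟨z, hz, hlim⟩ := hlim
  obtain ⟨M, hM⟩ : ∃ M, ∃ᶠ j in atTop, ‖s j z‖ < M := by
    simpa only [tendsto_atTop, not_forall, not_eventually, not_le] using hlim
  obtain ⟨φ, hφ, hφM⟩ := extraction_of_frequently_atTop hM
  have hbdd : LocallyUniformlyBoundedOn (fun j ↦ s (φ j)) Ω :=
    hF.locallyUniformlyBoundedOn hconn (fun j ↦ hs (φ j)) hz fun j ↦ (hφM j).le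
  obtain ⟨ψ, g, hψ, hg, hunif⟩ :=
    hbdd.exists_strictMono_tendstoUniformlyOn hΩ fun j ↦ hhol _ (hs (φ j))
  refine ⟨φ ∘ ψ, hφ.comp hψ, .inl ⟨g, hg, fun K hKΩ hK ε hε ↦ ?_⟩⟩
  obtain ⟨N, hN⟩ :=
    eventually_atTop.1 (Metric.tendstoUniformlyOn_iff.1 (hunif K hKΩ hK) ε hε)
  exact ⟨N, fun j hj w hw ↦ (chordal_le_dist _ _).trans_lt (dist_comm (g w) _ ▸ hN j hj w hw)⟩

theorem stmt9_general (hΩ : IsOpen Ω) (hconn : IsPreconnected Ω) (a b : E → ℂ)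
    (ha : DifferentiableOn ℂ a Ω) (hb : DifferentiableOn ℂ b Ω) (hab : ∀ z ∈ Ω, a z ≠ b z)
    (F : Set (E → ℂ)) (hhol : ∀ f ∈ F, DifferentiableOn ℂ f Ω)
    (hom : ∀ f ∈ F, ∀ z ∈ Ω, f z ≠ a z ∧ f z ≠ b z) : IsNormalFamily Ω F := by
  have hab' : ∀ z ∈ Ω, a z - b z ≠ 0 := fun z hz ↦ sub_ne_zero.2 (hab z hz)
  have hdiff : DifferentiableOn ℂ (fun z ↦ a z - b z) Ω := ha.fun_sub hb
  have hquot : ∀ f ∈ F, (fun z ↦ (f z - b z) / (a z - b z)) ∈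
      {h : E → ℂ | DifferentiableOn ℂ h Ω ∧ ∀ z ∈ Ω, h z ≠ 0 ∧ h z ≠ 1} := fun f hf ↦ by
    refine ⟨?_, fun z hz ↦ ⟨?_, fun h ↦ ?_⟩⟩
    · simpa only [div_eq_mul_inv] using ((hhol f hf).fun_sub hb).fun_mul (hdiff.fun_inv hab')
    · exact div_ne_zero (sub_ne_zero.2 (hom f hf z hz).2) (hab' z hz)
    · exact (hom f hf z hz).1 (sub_left_injective (eq_of_div_eq_one h))
  have hF : IsSchottkyFamilyOn F Ω := (isSchottkyFamilyOn_setOf_ne_zero_and_ne_one hΩ).of_affine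
    hΩ hb.continuousOn hdiff.continuousOn hab' hquot
  exact hF.isNormalFamily hΩ hconn hhol

end Normality

/-- Fatou's normality theorem in ℂⁿ. -/
theorem stmt9 {n : ℕ} {Ω : Set (Cn n)} (hΩ : IsOpen Ω) (hconn : IsConnected Ω)
    (a b : Cn n → ℂ) (ha : DifferentiableOn ℂ a Ω) (hb : DifferentiableOn ℂ b Ω)
    (hab : ∀ z ∈ Ω, a z ≠ b z)
    (F : Set (Cn n → ℂ)) (hhol : ∀ f ∈ F, DifferentiableOn ℂ f Ω)
    (hom : ∀ f ∈ F, ∀ z ∈ Ω, f z ≠ a z ∧ f z ≠ b z) :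
    IsNormalFamily Ω F :=
  stmt9_general hΩ hconn.isPreconnected a b ha hb hab F hhol hom
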